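/- Let X₁, X₂, … be i.i.d. real random variables with a Lebesgue density p, mean 0 and variance 1, let S̄_n := max_{1≤k≤n} (X₁+…+X_k), and let p̄_n denote the density of S̄_n. Then for every n ≥ 2 there exists a non-negative measurable function p̃_n on (0,∞) with ∫₀^∞ p̃_n(x) dx ≤ 1 such that p̄_n(x) = P(S̄_{n−1} < 0)·p(x) + p̃_n(x) for almost every x > 0; in particular p̄_n(x) ≥ P(S̄_{n−1} < 0)·p(x) for almost every x > 0. -/

import Mathlib

open MeasureTheory ProbabilityTheory Filter Set
open scoped ENNReal

/-
Splitting off the first step, `S̄ₙ = X₁ + max 0 T` with `T` the maximum of the partial sums of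
`X₂, …, Xₙ`. On the event `T < 0` the maximum is `X₁` itself, and this event is independent of `X₁`
and has probability `P(S̄ₙ₋₁ < 0)`. Hence the law of `S̄ₙ` dominates `P(S̄ₙ₋₁ < 0)` times the law
of `X₁`, and `p̃ₙ` is the difference of the two densities.
-/

section MaxPartialSum

variable {G : Type*} [AddCommGroup G] [LinearOrder G]

/-- The maximum of the partial sums of a sequence. The index is shifted to avoid an empty maximum:
with `x i` standing for `X_{i+1}`, `maxPartialSum x n` is `S̄_{n+1}`. -/
def maxPartialSum (x : ℕ → G) (n : ℕ) : G :=
  partialSups (fun k => ∑ i ∈ Finset.range (k + 1), x i) n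

lemma sup'_Icc_one_eq_maxPartialSum (x : ℕ → G) (n : ℕ) (h : (Finset.Icc 1 (n + 1)).Nonempty) :
    (Finset.Icc 1 (n + 1)).sup' h (fun k => ∑ i ∈ Finset.range k, x i) = maxPartialSum x n := by
  refine eq_of_forall_ge_iff fun a => ?_
  simp only [maxPartialSum, Finset.sup'_le_iff, Finset.mem_Icc, partialSups_le_iff]
  constructor
  · exact fun hk j hj => hk (j + 1) (by omega)
  · rintro hj k ⟨hk₁, hk₂⟩
    simpa only [Nat.sub_add_cancel hk₁] using hj (k - 1) (by omega)

lemma maxPartialSum_succ [IsOrderedAddMonoid G] (x : ℕ → G) (n : ℕ) :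
    maxPartialSum x (n + 1) = x 0 + max 0 (maxPartialSum (fun i => x (i + 1)) n) := by
  have hsum : (fun k => ∑ i ∈ Finset.range (k + 1), x i) ∘ (· + 1)
      = fun k => x 0 + ∑ i ∈ Finset.range (k + 1), x (i + 1) :=
    funext fun k => (Finset.sum_range_succ' x (k + 1)).trans (add_comm _ _)
  rw [maxPartialSum, partialSups_add_one', hsum, partialSups_const_add, ← max_add_add_left]
  simp [maxPartialSum]

lemma measurable_maxPartialSum [MeasurableSpace G] [MeasurableAdd₂ G] [MeasurableSup₂ G] (n : ℕ) :
    Measurable fun x : ℕ → G => maxPartialSum x n := by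
  simp only [maxPartialSum, partialSups_eq_sup'_range]
  fun_prop

end MaxPartialSum

section Independence

variable {Ω E F : Type*} [MeasurableSpace Ω] [MeasurableSpace E] [MeasurableSpace F]
  {μ : Measure Ω}

lemma indepFun_process_of_notMem_range {ι κ : Type*} {X : ι → Ω → E} (hX : ∀ i, Measurable (X i))
    (hindep : iIndepFun X μ) {i : ι} {g : κ → ι} (hi : i ∉ range g) :
    IndepFun (X i) (fun ω k => X (g k) ω) μ := by
  classical
  have := hindep.isProbabilityMeasure
  refine IndepFun.indepFun_process (hX i) (fun k => hX (g k)) fun K => ?_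
  have hdisj : Disjoint {i} (K.image g) := by
    rw [Finset.disjoint_singleton_left, Finset.mem_image]
    exact fun ⟨k, _, hk⟩ => hi ⟨k, hk⟩
  exact (hindep.indepFun_finset {i} (K.image g) hdisj hX).comp
    (φ := fun y : ({i} : Finset ι) → E => y ⟨i, Finset.mem_singleton_self i⟩)
    (ψ := fun (y : K.image g → E) (k : K) => y ⟨g k, Finset.mem_image_of_mem g k.2⟩)
    (by fun_prop) (by fun_prop)

lemma identDistrib_process_comp_of_injective {ι : Type*} [Countable ι] {X : ι → Ω → E}
    (hindep : iIndepFun X μ) {g : ι → ι} (hg : g.Injective)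
    (hident : ∀ i, IdentDistrib (X (g i)) (X i) μ μ) :
    IdentDistrib (fun ω i => X (g i) ω) (fun ω i => X i ω) μ μ :=
  IdentDistrib.pi hident (hindep.precomp hg) hindep

lemma measure_preimage_smul_map_le_map_of_eqOn {Y Z : Ω → E} {T : Ω → F} (hY : Measurable Y)
    (hZ : Measurable Z) (hYT : IndepFun Y T μ) {s : Set F} (hs : MeasurableSet s)
    (hYZ : EqOn Z Y (T ⁻¹' s)) :
    μ (T ⁻¹' s) • μ.map Y ≤ μ.map Z := by
  refine Measure.le_iff.2 fun A hA => ?_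
  calc (μ (T ⁻¹' s) • μ.map Y) A = μ (Y ⁻¹' A ∩ T ⁻¹' s) := by
        rw [Measure.smul_apply, Measure.map_apply hY hA, smul_eq_mul, mul_comm,
          hYT.measure_inter_preimage_eq_mul A s hA hs]
    _ ≤ μ (Z ⁻¹' A) := measure_mono fun ω ⟨hωA, hωs⟩ => by
        rwa [mem_preimage, hYZ hωs]
    _ = μ.map Z A := (Measure.map_apply hZ hA).symm

variable {G : Type*} [AddCommGroup G] [LinearOrder G] [IsOrderedAddMonoid G] [TopologicalSpace G]
  [ClosedIciTopology G] [MeasurableSpace G] [OpensMeasurableSpace G] [MeasurableAdd₂ G]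
  [MeasurableSup₂ G]

lemma measure_maxPartialSum_neg_smul_map_le {X : ℕ → Ω → G} (hX : ∀ i, Measurable (X i))
    (hindep : iIndepFun X μ) (hident : ∀ i, IdentDistrib (X i) (X 0) μ μ) (n : ℕ) :
    μ {ω | maxPartialSum (X · ω) n < 0} • μ.map (X 0)
      ≤ μ.map fun ω => maxPartialSum (X · ω) (n + 1) := by
  let T : Ω → G := fun ω => maxPartialSum (fun i => X (i + 1) ω) n
  have hT : IdentDistrib T (fun ω => maxPartialSum (X · ω) n) μ μ :=
    (identDistrib_process_comp_of_injective hindep (add_left_injective 1)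
      fun i => (hident (i + 1)).trans (hident i).symm).comp (measurable_maxPartialSum n)
  have hXT : IndepFun (X 0) T μ :=
    (indepFun_process_of_notMem_range hX hindep (by simp)).comp measurable_id
      (measurable_maxPartialSum n)
  have heq : EqOn (fun ω => maxPartialSum (X · ω) (n + 1)) (X 0) (T ⁻¹' Iio 0) :=
    fun ω (hω : T ω < 0) => by
      simp only [maxPartialSum_succ, max_eq_left hω.le, T, add_zero]
  calc μ {ω | maxPartialSum (X · ω) n < 0} • μ.map (X 0) = μ (T ⁻¹' Iio 0) • μ.map (X 0) :=
        congrArg (· • μ.map (X 0)) (hT.measure_mem_eq measurableSet_Iio).symm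
    _ ≤ μ.map fun ω => maxPartialSum (X · ω) (n + 1) :=
        measure_preimage_smul_map_le_map_of_eqOn (hX 0)
          ((measurable_maxPartialSum (n + 1)).comp (measurable_pi_lambda _ hX)) hXT
          measurableSet_Iio heq

end Independence

section Density

variable {α : Type*} [MeasurableSpace α] {ν : Measure α} {p q : α → ℝ}

lemma ae_mul_le_of_smul_withDensity_le [SigmaFinite ν] (hp : Measurable p) (hq : 0 ≤ q)
    {c : ℝ≥0∞} (hc : c ≠ ∞)
    (h : c • ν.withDensity (fun x => ENNReal.ofReal (p x))
      ≤ ν.withDensity fun x => ENNReal.ofReal (q x)) :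
    ∀ᵐ x ∂ν, c.toReal * p x ≤ q x := by
  have hle : (fun x => c * ENNReal.ofReal (p x)) ≤ᵐ[ν] fun x => ENNReal.ofReal (q x) := by
    refine ae_le_of_forall_setLIntegral_le_of_sigmaFinite (by fun_prop) fun s hs _ => ?_
    rw [lintegral_const_mul _ (by fun_prop), ← withDensity_apply _ hs, ← withDensity_apply _ hs]
    exact h s
  filter_upwards [hle] with x hx
  rwa [← ENNReal.ofReal_toReal hc, ← ENNReal.ofReal_mul ENNReal.toReal_nonneg,
    ENNReal.ofReal_le_ofReal_iff (hq x)] at hx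

lemma integrable_of_isFiniteMeasure_withDensity_ofReal (hp : Measurable p) (hp0 : 0 ≤ p)
    [IsFiniteMeasure (ν.withDensity fun x => ENNReal.ofReal (p x))] : Integrable p ν := by
  rw [← lintegral_ofReal_ne_top_iff_integrable hp.aestronglyMeasurable (ae_of_all _ hp0),
    ← setLIntegral_univ, ← withDensity_apply _ .univ]
  exact measure_ne_top _ _

lemma integral_eq_withDensity_ofReal_real_univ (hp : Measurable p) (hp0 : 0 ≤ p) :
    ∫ x, p x ∂ν = (ν.withDensity fun x => ENNReal.ofReal (p x)).real univ := by
  rw [integral_eq_lintegral_of_nonneg_ae (ae_of_all _ hp0) hp.aestronglyMeasurable, measureReal_def,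
    withDensity_apply _ .univ, setLIntegral_univ]

lemma exists_ae_eq_mul_add_of_smul_withDensity_le [SigmaFinite ν] (hp : Measurable p) (hp0 : 0 ≤ p)
    (hq : Measurable q) (hq0 : 0 ≤ q)
    [IsProbabilityMeasure (ν.withDensity fun x => ENNReal.ofReal (p x))]
    [IsProbabilityMeasure (ν.withDensity fun x => ENNReal.ofReal (q x))] {c : ℝ≥0∞} (hc : c ≠ ∞)
    (h : c • ν.withDensity (fun x => ENNReal.ofReal (p x))
      ≤ ν.withDensity fun x => ENNReal.ofReal (q x)) :
    ∃ r : α → ℝ, Measurable r ∧ 0 ≤ r ∧ Integrable r ν ∧ ∫ x, r x ∂ν = 1 - c.toReal ∧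
      ∀ᵐ x ∂ν, q x = c.toReal * p x + r x := by
  have hr : (fun x => q x - c.toReal * p x) =ᵐ[ν] fun x => max (q x - c.toReal * p x) 0 := by
    filter_upwards [ae_mul_le_of_smul_withDensity_le hp hq0 hc h] with x hx
    exact (max_eq_left (sub_nonneg.2 hx)).symm
  have hp_int : Integrable (fun x => c.toReal * p x) ν :=
    (integrable_of_isFiniteMeasure_withDensity_ofReal hp hp0).const_mul c.toReal
  have hq_int : Integrable q ν := integrable_of_isFiniteMeasure_withDensity_ofReal hq hq0
  refine ⟨fun x => max (q x - c.toReal * p x) 0, by fun_prop, fun x => le_max_right _ _,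
    (hq_int.sub hp_int).congr hr, ?_, ?_⟩
  · rw [← integral_congr_ae hr, integral_sub hq_int hp_int, integral_const_mul,
      integral_eq_withDensity_ofReal_real_univ hp hp0,
      integral_eq_withDensity_ofReal_real_univ hq hq0, probReal_univ, probReal_univ, mul_one]
  · filter_upwards [hr] with x hx
    rw [← hx, add_sub_cancel]

end Density

theorem stmt18_general {Ω G : Type*} [MeasurableSpace Ω] {μ : Measure Ω}
    [AddCommGroup G] [LinearOrder G] [IsOrderedAddMonoid G] [TopologicalSpace G]
    [ClosedIciTopology G] [MeasurableSpace G] [OpensMeasurableSpace G] [MeasurableAdd₂ G]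
    [MeasurableSup₂ G] {ν : Measure G} [SigmaFinite ν]
    {X : ℕ → Ω → G} (hX : ∀ i, Measurable (X i)) (hindep : iIndepFun X μ)
    (hident : ∀ i, IdentDistrib (X i) (X 0) μ μ)
    {p : G → ℝ} (hp : Measurable p) (hp0 : 0 ≤ p)
    (hpdens : μ.map (X 0) = ν.withDensity fun x => ENNReal.ofReal (p x))
    {S : ℕ → Ω → G}
    (hS : ∀ n, ∀ hn : 1 ≤ n, ∀ ω, S n ω = (Finset.Icc 1 n).sup' (Finset.nonempty_Icc.mpr hn)
      fun k => ∑ i ∈ Finset.range k, X i ω)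
    {n : ℕ} (hn : 2 ≤ n) {q : G → ℝ} (hq : Measurable q) (hq0 : 0 ≤ q)
    (hqdens : μ.map (S n) = ν.withDensity fun x => ENNReal.ofReal (q x)) :
    ∃ r : G → ℝ, Measurable r ∧ 0 ≤ r ∧ Integrable r ν ∧
      ∫ x, r x ∂ν = 1 - μ.real {ω | S (n - 1) ω < 0} ∧
      ∀ᵐ x ∂ν, q x = μ.real {ω | S (n - 1) ω < 0} * p x + r x := by
  have := hindep.isProbabilityMeasure
  obtain ⟨m, rfl⟩ := Nat.exists_eq_add_of_le' hn
  have hS_eq (k : ℕ) : S (k + 1) = fun ω => maxPartialSum (X · ω) k :=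
    funext fun ω => (hS (k + 1) k.succ_pos ω).trans (sup'_Icc_one_eq_maxPartialSum _ k _)
  have hS_meas : Measurable (S (m + 2)) := by
    rw [hS_eq]
    exact (measurable_maxPartialSum (m + 1)).comp (measurable_pi_lambda _ hX)
  have hle : μ {ω | S (m + 1) ω < 0} • μ.map (X 0) ≤ μ.map (S (m + 2)) := by
    simpa only [hS_eq] using measure_maxPartialSum_neg_smul_map_le hX hindep hident m
  have := hpdens ▸ Measure.isProbabilityMeasure_map (μ := μ) (hX 0).aemeasurable
  have := hqdens ▸ Measure.isProbabilityMeasure_map (μ := μ) hS_meas.aemeasurable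
  rw [hpdens, hqdens] at hle
  exact exists_ae_eq_mul_add_of_smul_withDensity_le hp hp0 hq hq0 (measure_ne_top _ _) hle

/-- Decomposition of the density of `S̄ₙ` on the positive half-line:
`p̄ₙ(x) = P(S̄_{n-1} < 0) p(x) + p̃ₙ(x)` a.e. on `(0,∞)` for a subprobability
density `p̃ₙ`; in particular `p̄ₙ(x) ≥ P(S̄_{n-1} < 0) p(x)` a.e. on `(0,∞)`. -/
theorem stmt18 {Ω : Type*} [MeasureSpace Ω] [IsProbabilityMeasure (ℙ : Measure Ω)]
    (X : ℕ → Ω → ℝ) (hmeas : ∀ i, Measurable (X i))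
    (hindep : iIndepFun X ℙ)
    (hident : ∀ i, Measure.map (X i) ℙ = Measure.map (X 0) ℙ)
    (hL2 : MemLp (X 0) 2 ℙ)
    (hmean : ∫ ω, X 0 ω ∂ℙ = 0)
    (hvar : ∫ ω, (X 0 ω) ^ 2 ∂ℙ = 1)
    (p : ℝ → ℝ) (hpmeas : Measurable p) (hp0 : ∀ x, 0 ≤ p x)
    (hpdens : Measure.map (X 0) ℙ = volume.withDensity (fun x => ENNReal.ofReal (p x)))
    (Sbar : ℕ → Ω → ℝ)
    (hSbar : ∀ n, ∀ hn : 1 ≤ n, ∀ ω, Sbar n ω =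
      (Finset.Icc 1 n).sup' (Finset.nonempty_Icc.mpr hn)
        (fun k => ∑ i ∈ Finset.range k, X i ω))
    (pbar : ℕ → ℝ → ℝ) (hpbarmeas : ∀ n, Measurable (pbar n))
    (hpbar0 : ∀ n x, 0 ≤ pbar n x)
    (hpbar : ∀ n, 1 ≤ n → Measure.map (Sbar n) ℙ
      = volume.withDensity (fun x => ENNReal.ofReal (pbar n x))) :
    ∀ n, 2 ≤ n → ∃ ptilde : ℝ → ℝ,
      Measurable ptilde ∧ (∀ x, 0 ≤ ptilde x) ∧
      (∫ x in Ioi (0 : ℝ), ptilde x) ≤ 1 ∧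
      (∀ᵐ x ∂(volume.restrict (Ioi (0 : ℝ))),
        pbar n x = (ℙ {ω | Sbar (n - 1) ω < 0}).toReal * p x + ptilde x) ∧
      (∀ᵐ x ∂(volume.restrict (Ioi (0 : ℝ))),
        (ℙ {ω | Sbar (n - 1) ω < 0}).toReal * p x ≤ pbar n x) := by
  intro n hn
  obtain ⟨ptilde, hr_meas, hr0, hint, hmass, heq⟩ := stmt18_general hmeas hindep
    (fun i => ⟨(hmeas i).aemeasurable, (hmeas 0).aemeasurable, hident i⟩) hpmeas hp0 hpdens hSbar
    hn (hpbarmeas n) (hpbar0 n) (hpbar n (by omega))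
  exact ⟨ptilde, hr_meas, hr0,
    (setIntegral_le_integral hint (ae_of_all _ hr0)).trans
      (hmass.trans_le (sub_le_self 1 measureReal_nonneg)),
    ae_restrict_of_ae heq,
    ae_restrict_of_ae (heq.mono fun x hx => (le_add_of_nonneg_right (hr0 x)).trans_eq hx.symm)⟩
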